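/- Let A be a finite-dimensional cyclic left Leibniz algebra generated by a. Then A has a unique Cartan subalgebra, namely the Fitting null component of L_a acting on A. -/

import Mathlib

open Polynomial LinearMap

/-- A (left) Leibniz algebra structure on the `K`-vector space `A`:
a bilinear multiplication satisfying `x(yz) = (xy)z + y(xz)`. -/
structure LeibnizMul (K A : Type*) [Field K] [AddCommGroup A] [Module K A] where
  mul : A →ₗ[K] A →ₗ[K] A
  leibniz : ∀ x y z, mul x (mul y z) = mul (mul x y) z + mul y (mul x z)

namespace LeibnizMul

variable {K A : Type*} [Field K] [AddCommGroup A] [Module K A]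

/-- The product of two subspaces: the span of all products `s·t`, `s ∈ S`, `t ∈ T`. -/
def mulSub (m : LeibnizMul K A) (S T : Submodule K A) : Submodule K A :=
  Submodule.span K (Set.image2 (fun x y => m.mul x y) (S : Set A) (T : Set A))

/-- Relative lower central series of the subalgebra `S`: `lcsIn m S n = S^(n+1)`,
i.e. `lcsIn m S 0 = S` and `lcsIn m S (n+1) = S · (lcsIn m S n)`. -/
def lcsIn (m : LeibnizMul K A) (S : Submodule K A) : ℕ → Submodule K A
  | 0 => S
  | (n+1) => m.mulSub S (m.lcsIn S n)

/-- `A` is nilpotent: some term of the lower central series vanishes. -/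
def IsNilpotent (m : LeibnizMul K A) : Prop := ∃ n, m.lcsIn ⊤ n = ⊥

/-- `S` is a subalgebra: a subspace closed under multiplication. -/
def IsSubalg (m : LeibnizMul K A) (S : Submodule K A) : Prop :=
  ∀ x ∈ S, ∀ y ∈ S, m.mul x y ∈ S

/-- `S` is a (two-sided) ideal. -/
def IsIdeal (m : LeibnizMul K A) (S : Submodule K A) : Prop :=
  ∀ (x : A), ∀ y ∈ S, m.mul x y ∈ S ∧ m.mul y x ∈ S

/-- `M` is a maximal (proper) subalgebra. -/
def IsMaxSubalg (m : LeibnizMul K A) (M : Submodule K A) : Prop :=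
  m.IsSubalg M ∧ M ≠ ⊤ ∧ ∀ S, m.IsSubalg S → M < S → S = ⊤

/-- The Frattini subalgebra: the intersection of all maximal subalgebras. -/
def frattini (m : LeibnizMul K A) : Submodule K A :=
  sInf {M | m.IsMaxSubalg M}

/-- The subalgebra generated by a single element `a`. -/
def subalgGen (m : LeibnizMul K A) (a : A) : Submodule K A :=
  sInf {S | m.IsSubalg S ∧ a ∈ S}

/-- The normal closure of a subspace: the smallest ideal containing it. -/
def normalClosure (m : LeibnizMul K A) (S : Submodule K A) : Submodule K A :=
  sInf {I | m.IsIdeal I ∧ S ≤ I}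

/-- The normalizer of a subspace `C`: all `x` with `x·c ∈ C` and `c·x ∈ C` for all `c ∈ C`. -/
def normalizer (m : LeibnizMul K A) (C : Submodule K A) : Submodule K A :=
  ⨅ c : C, (Submodule.comap (m.mul.flip (c : A)) C ⊓ Submodule.comap (m.mul (c : A)) C)

/-- The center of the subalgebra `S`: all `z ∈ S` with `z·x = x·z = 0` for all `x ∈ S`. -/
def centerIn (m : LeibnizMul K A) (S : Submodule K A) : Submodule K A :=
  S ⊓ ⨅ x : S, (LinearMap.ker (m.mul.flip (x : A)) ⊓ LinearMap.ker (m.mul (x : A)))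

/-- All `z ∈ S` with `z·x ∈ T` and `x·z ∈ T` for all `x ∈ S`. -/
def relCentralizer (m : LeibnizMul K A) (S T : Submodule K A) : Submodule K A :=
  S ⊓ ⨅ x : S, (Submodule.comap (m.mul.flip (x : A)) T ⊓ Submodule.comap (m.mul (x : A)) T)

/-- The upper central series of the subalgebra `S`:
`Z₀ = 0`, `Z_{j+1} = {z ∈ S : zS ⊆ Z_j and Sz ⊆ Z_j}`. -/
def ucsIn (m : LeibnizMul K A) (S : Submodule K A) : ℕ → Submodule K A
  | 0 => ⊥
  | (j+1) => m.relCentralizer S (m.ucsIn S j)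

/-- The right center `{r : A·r = 0}`. -/
def rightCenter (m : LeibnizMul K A) : Submodule K A := LinearMap.ker m.mul.flip

/-- Left-normed powers of `a`: `lpow m a k = a^(k+1)`. -/
def lpow (m : LeibnizMul K A) (a : A) : ℕ → A
  | 0 => a
  | (k+1) => m.mul a (m.lpow a k)

/-- The Fitting null component of left multiplication by `a`. -/
def fittingNull (m : LeibnizMul K A) (a : A) : Submodule K A :=
  ⨆ k, LinearMap.ker ((m.mul a) ^ k)

end LeibnizMul

namespace LeibnizMul

variable {K A : Type*} [Field K] [AddCommGroup A] [Module K A]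

theorem subalgGen_le (m : LeibnizMul K A) {a : A} {S : Submodule K A} (hS : m.IsSubalg S)
    (ha : a ∈ S) : m.subalgGen a ≤ S :=
  sInf_le ⟨hS, ha⟩

theorem mul_mul_eq_zero_of_eq_smul (m : LeibnizMul K A) {f : Module.End K A} {x y : A} {c d : K}
    (hx : m.mul x = c • f) (hy : m.mul y = d • f) : m.mul (m.mul x y) = 0 := by
  ext z
  have h := m.leibniz x y z
  rw [hx, hy] at h
  simpa [hx, smul_comm c d] using h

/-- In a cyclic algebra, every left multiplication is a multiple of that by the generator. -/
theorem exists_mul_eq_smul (m : LeibnizMul K A) {a : A} (hcyc : m.subalgGen a = ⊤) (x : A) :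
    ∃ c : K, m.mul x = c • m.mul a := by
  have hS : m.IsSubalg ((K ∙ m.mul a).comap m.mul) := by
    intro x hx y hy
    obtain ⟨c, hc⟩ := Submodule.mem_span_singleton.1 hx
    obtain ⟨d, hd⟩ := Submodule.mem_span_singleton.1 hy
    simp [m.mul_mul_eq_zero_of_eq_smul hc.symm hd.symm]
  have hx := m.subalgGen_le hS (Submodule.mem_span_singleton_self (m.mul a))
    (hcyc ▸ Submodule.mem_top : x ∈ m.subalgGen a)
  obtain ⟨c, hc⟩ := Submodule.mem_span_singleton.1 hx
  exact ⟨c, hc.symm⟩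

theorem mul_mul_eq_zero (m : LeibnizMul K A) {a : A} (hcyc : m.subalgGen a = ⊤) (x y : A) :
    m.mul (m.mul x y) = 0 := by
  obtain ⟨c, hc⟩ := m.exists_mul_eq_smul hcyc x
  obtain ⟨d, hd⟩ := m.exists_mul_eq_smul hcyc y
  exact m.mul_mul_eq_zero_of_eq_smul hc hd

theorem mem_normalizer (m : LeibnizMul K A) {C : Submodule K A} {x : A} :
    x ∈ m.normalizer C ↔ ∀ c ∈ C, m.mul x c ∈ C ∧ m.mul c x ∈ C := by
  simp [normalizer]

theorem mem_fittingNull (m : LeibnizMul K A) {a x : A} :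
    x ∈ m.fittingNull a ↔ ∃ k, (m.mul a ^ k) x = 0 := by
  rw [fittingNull, Submodule.mem_iSup_of_directed _
    (monotone_nat_of_le_succ fun k y hy => ?_).directed_le]
  · rfl
  · rw [mem_ker] at hy ⊢
    rw [pow_succ', Module.End.mul_apply, hy, map_zero]

theorem mul_mem_fittingNull_iff (m : LeibnizMul K A) {a x : A} :
    m.mul a x ∈ m.fittingNull a ↔ x ∈ m.fittingNull a := by
  simp only [mem_fittingNull]
  constructor
  · rintro ⟨k, hk⟩
    exact ⟨k + 1, by rwa [pow_succ]⟩
  · rintro ⟨k, hk⟩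
    refine ⟨k, ?_⟩
    rw [← Module.End.mul_apply, ← pow_succ, pow_succ', Module.End.mul_apply, hk, map_zero]

theorem pow_mul_mem_lcsIn (m : LeibnizMul K A) {C : Submodule K A} {c x : A} (hc : c ∈ C)
    (hx : x ∈ C) (n : ℕ) : (m.mul c ^ n) x ∈ m.lcsIn C n := by
  induction n with
  | zero => exact hx
  | succ n ih =>
    rw [pow_succ', Module.End.mul_apply]
    exact Submodule.subset_span (Set.mem_image2_of_mem hc ih)

theorem lcsIn_le_map_pow (m : LeibnizMul K A) {a : A} (hcyc : m.subalgGen a = ⊤)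
    (C : Submodule K A) (n : ℕ) : m.lcsIn C n ≤ C.map (m.mul a ^ n) := by
  induction n with
  | zero => simp [lcsIn, Module.End.one_eq_id]
  | succ n ih =>
    refine Submodule.span_le.2 ?_
    rintro _ ⟨x, -, y, hy, rfl⟩
    obtain ⟨z, hz, rfl⟩ := ih hy
    obtain ⟨c, hc⟩ := m.exists_mul_eq_smul hcyc x
    refine ⟨c • z, C.smul_mem c hz, ?_⟩
    simp [hc, pow_succ']

theorem isSubalg_fittingNull (m : LeibnizMul K A) {a : A} (hcyc : m.subalgGen a = ⊤) :
    m.IsSubalg (m.fittingNull a) := by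
  intro x _ y hy
  obtain ⟨c, hc⟩ := m.exists_mul_eq_smul hcyc x
  rw [hc]
  exact Submodule.smul_mem _ c (m.mul_mem_fittingNull_iff.2 hy)

theorem exists_lcsIn_fittingNull_eq_bot [FiniteDimensional K A] (m : LeibnizMul K A) {a : A}
    (hcyc : m.subalgGen a = ⊤) : ∃ n, m.lcsIn (m.fittingNull a) n = ⊥ := by
  obtain ⟨n, hn⟩ := (m.mul a).eventually_iSup_ker_pow_eq.exists
  refine ⟨n, le_bot_iff.1 ((m.lcsIn_le_map_pow hcyc _ n).trans ?_)⟩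
  rintro _ ⟨x, hx, rfl⟩
  rw [fittingNull, hn] at hx
  exact hx

/-- Some element of the Fitting null component acts on the left as the generator does. -/
theorem exists_mem_fittingNull_mul_eq [FiniteDimensional K A] (m : LeibnizMul K A) {a : A}
    (hcyc : m.subalgGen a = ⊤) : ∃ f ∈ m.fittingNull a, m.mul f = m.mul a := by
  have ha : a ∈ m.fittingNull a ⊔ ⨅ k, range (m.mul a ^ k) := by
    rw [fittingNull, (m.mul a).isCompl_iSup_ker_pow_iInf_range_pow.sup_eq_top]
    exact Submodule.mem_top
  obtain ⟨f, hf, r, hr, hfr⟩ := Submodule.mem_sup.1 ha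
  obtain ⟨s, rfl⟩ := Submodule.mem_iInf _ |>.1 hr 1
  refine ⟨f, hf, ?_⟩
  have h := congrArg m.mul hfr
  rwa [map_add, pow_one, m.mul_mul_eq_zero hcyc, add_zero] at h

theorem normalizer_fittingNull [FiniteDimensional K A] (m : LeibnizMul K A) {a : A}
    (hcyc : m.subalgGen a = ⊤) : m.normalizer (m.fittingNull a) = m.fittingNull a := by
  refine le_antisymm (fun x hx => ?_) fun x hx => m.mem_normalizer.2 fun c hc =>
    ⟨m.isSubalg_fittingNull hcyc x hx c hc, m.isSubalg_fittingNull hcyc c hc x hx⟩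
  obtain ⟨f, hf, hfa⟩ := m.exists_mem_fittingNull_mul_eq hcyc
  exact m.mul_mem_fittingNull_iff.1 (hfa ▸ (m.mem_normalizer.1 hx f hf).2)

/-- A self-normalizing subalgebra acting trivially on the left contains the generator, so it is the
whole algebra. -/
theorem eq_fittingNull_of_mul_eq_zero (m : LeibnizMul K A) {a : A} (hcyc : m.subalgGen a = ⊤)
    {C : Submodule K A} (hC : m.IsSubalg C) (hN : m.normalizer C = C)
    (h0 : ∀ c ∈ C, m.mul c = 0) : C = m.fittingNull a := by
  have hmul (x y : A) : m.mul x y ∈ C := by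
    rw [← hN, mem_normalizer]
    intro c hc
    simp [m.mul_mul_eq_zero hcyc, h0 c hc]
  have ha : a ∈ C := by
    rw [← hN, mem_normalizer]
    exact fun c _ => ⟨hmul a c, hmul c a⟩
  have hF : m.fittingNull a = ⊤ :=
    eq_top_iff.2 fun x _ => m.mem_fittingNull.2 ⟨1, by simp [h0 a ha]⟩
  rw [hF, ← top_le_iff, ← hcyc]
  exact m.subalgGen_le hC ha

theorem eq_fittingNull_of_mul_ne_zero (m : LeibnizMul K A) {a : A} (hcyc : m.subalgGen a = ⊤)
    {C : Submodule K A} (hC : m.IsSubalg C) {n : ℕ} (hn : m.lcsIn C n = ⊥)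
    (hN : m.normalizer C = C) {c : A} (hc : c ∈ C) (hc0 : m.mul c ≠ 0) :
    C = m.fittingNull a := by
  obtain ⟨r, hr⟩ := m.exists_mul_eq_smul hcyc c
  have hr0 : r ≠ 0 := by
    rintro rfl
    exact hc0 (by rw [hr, zero_smul])
  have hstable (x : A) (hx : x ∈ C) : m.mul a x ∈ C := by
    have h := hC c hc x hx
    rw [hr] at h
    exact (Submodule.smul_mem_iff C hr0).1 h
  refine le_antisymm (fun x hx => ?_) fun x hx => ?_
  · have h := m.pow_mul_mem_lcsIn hc hx n
    rw [hn, Submodule.mem_bot, hr, _root_.smul_pow, LinearMap.smul_apply] at h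
    exact m.mem_fittingNull.2 ⟨n, (smul_eq_zero.1 h).resolve_left (pow_ne_zero n hr0)⟩
  · obtain ⟨k, hk⟩ := m.mem_fittingNull.1 hx
    clear hx
    induction k generalizing x with
    | zero =>
      obtain rfl : x = 0 := hk
      exact C.zero_mem
    | succ k ih =>
      have hax : m.mul a x ∈ C := ih _ (by rwa [pow_succ] at hk)
      rw [← hN, mem_normalizer]
      intro y hy
      obtain ⟨s, hs⟩ := m.exists_mul_eq_smul hcyc x
      obtain ⟨t, ht⟩ := m.exists_mul_eq_smul hcyc y
      rw [hs, ht]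
      exact ⟨C.smul_mem s (hstable y hy), C.smul_mem t hax⟩

end LeibnizMul

/-- a cyclic Leibniz algebra generated by `a` has a unique Cartan
subalgebra, namely the Fitting null component of `L_a`. -/
theorem stmt13 {K A : Type*} [Field K] [AddCommGroup A] [Module K A] [FiniteDimensional K A]
    (m : LeibnizMul K A) (a : A) (hcyc : m.subalgGen a = ⊤) :
    ∀ C : Submodule K A,
      (m.IsSubalg C ∧ (∃ n, m.lcsIn C n = ⊥) ∧ m.normalizer C = C) ↔
        C = m.fittingNull a := by
  intro C
  constructor
  · rintro ⟨hC, ⟨n, hn⟩, hN⟩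
    by_cases h0 : ∀ c ∈ C, m.mul c = 0
    · exact m.eq_fittingNull_of_mul_eq_zero hcyc hC hN h0
    · push Not at h0
      obtain ⟨c, hc, hc0⟩ := h0
      exact m.eq_fittingNull_of_mul_ne_zero hcyc hC hn hN hc hc0
  · rintro rfl
    exact ⟨m.isSubalg_fittingNull hcyc, m.exists_lcsIn_fittingNull_eq_bot hcyc,
      m.normalizer_fittingNull hcyc⟩
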